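/- arXiv:0709.3803 — 6 statements merged into one kernel-verified Lean document; each statement's English description precedes it below -/
import Mathlib

section
/- Let k be a field, S a group, and let V and W be finite-dimensional k-vector spaces equipped with k-linear S-actions. Let f : V → W be a surjective S-equivariant k-linear map. If the quotient S-module V/V^S has no trivial composition factor (i.e., there do not exist S-submodules A ⊆ B of V/V^S with A ≠ B such that S acts trivially on B/A), then f maps V^S onto W^S, that is, f(V^S) = W^S. -/
/-- A `k`-submodule `p` of `V` is an `S`-submodule (subrepresentation) for the
representation `ρ` if it is stable under the action of every element of `S`. -/
def IsSubrep {k S V : Type*} [CommRing k] [Group S] [AddCommGroup V] [Module k V]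
    (ρ : Representation k S V) (p : Submodule k V) : Prop :=
  ∀ (s : S), ∀ v ∈ p, ρ s v ∈ p

/-- The submodule `V^S` of `S`-fixed vectors of the representation `ρ`. -/
def fixedSubmodule {k S V : Type*} [CommRing k] [Group S] [AddCommGroup V] [Module k V]
    (ρ : Representation k S V) : Submodule k V where
  carrier := {v | ∀ s : S, ρ s v = v}
  add_mem' := by
    intro a b ha hb s
    rw [map_add, ha s, hb s]
  zero_mem' := fun s => map_zero (ρ s)
  smul_mem' := by
    intro c v hv s
    rw [map_smul, hv s]

theorem fixedSubmodule_isSubrep {k S V : Type*} [CommRing k] [Group S] [AddCommGroup V]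
    [Module k V] (ρ : Representation k S V) : IsSubrep ρ (fixedSubmodule ρ) := by
  intro s v hv
  rw [hv s]
  exact hv

/-- An `S`-module has a trivial composition factor if there are `S`-submodules
`A ⊆ B` with `A ≠ B` such that `S` acts trivially on `B/A`. -/
def HasTrivialCompositionFactor {k S V : Type*} [CommRing k] [Group S] [AddCommGroup V]
    [Module k V] (ρ : Representation k S V) : Prop :=
  ∃ A B : Submodule k V, IsSubrep ρ A ∧ IsSubrep ρ B ∧ A ≤ B ∧ A ≠ B ∧
    ∀ (s : S), ∀ v ∈ B, ρ s v - v ∈ A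

/-- The induced representation on a quotient by an `S`-stable submodule. -/
def quotRep {k S V : Type*} [CommRing k] [Group S] [AddCommGroup V] [Module k V]
    (ρ : Representation k S V) (N : Submodule k V) (hN : IsSubrep ρ N) :
    Representation k S (V ⧸ N) where
  toFun s := N.mapQ N (ρ s) (fun v hv => hN s v hv)
  map_one' := by
    refine LinearMap.ext fun x => ?_
    obtain ⟨v, rfl⟩ := Submodule.Quotient.mk_surjective N x
    simp [Submodule.mapQ_apply]
  map_mul' s t := by
    refine LinearMap.ext fun x => ?_
    obtain ⟨v, rfl⟩ := Submodule.Quotient.mk_surjective N x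
    simp [Submodule.mapQ_apply, Module.End.mul_apply]

/-- if `f : V → W` is a surjective `S`-equivariant `k`-linear map of
finite-dimensional representations and the quotient `S`-module `V/V^S` has no
trivial composition factor, then `f(V^S) = W^S`. -/
theorem stmt_0 {k S V W : Type*} [Field k] [Group S]
    [AddCommGroup V] [Module k V] [FiniteDimensional k V]
    [AddCommGroup W] [Module k W] [FiniteDimensional k W]
    (ρ : Representation k S V) (σ : Representation k S W)
    (f : V →ₗ[k] W) (hsurj : Function.Surjective f)
    (hequiv : ∀ (s : S) (v : V), f (ρ s v) = σ s (f v))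
    (hnt : ¬ HasTrivialCompositionFactor
      (quotRep ρ (fixedSubmodule ρ) (fixedSubmodule_isSubrep ρ))) :
    (fixedSubmodule ρ).map f = fixedSubmodule σ := by
  apply le_antisymm
  · rintro _ ⟨v, hv, rfl⟩ s
    rw [← hequiv, hv s]
  · intro w hw
    by_contra hcon
    apply hnt
    refine ⟨(LinearMap.ker f).map (fixedSubmodule ρ).mkQ,
      ((fixedSubmodule σ).comap f).map (fixedSubmodule ρ).mkQ, ?_, ?_, ?_, ?_, ?_⟩
    · rintro s _ ⟨v, hv, rfl⟩
      refine ⟨ρ s v, ?_, rfl⟩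
      have hv' : f v = 0 := hv
      change f (ρ s v) = 0
      rw [hequiv, hv', map_zero]
    · rintro s _ ⟨v, hv, rfl⟩
      refine ⟨ρ s v, ?_, rfl⟩
      change f (ρ s v) ∈ fixedSubmodule σ
      rw [hequiv]
      exact fixedSubmodule_isSubrep σ s _ hv
    · apply Submodule.map_mono
      intro v hv
      have hv' : f v = 0 := hv
      change f v ∈ fixedSubmodule σ
      rw [hv']
      exact zero_mem _
    · intro hAB
      obtain ⟨v, rfl⟩ := hsurj w
      have hmem : (fixedSubmodule ρ).mkQ v ∈
          ((fixedSubmodule σ).comap f).map (fixedSubmodule ρ).mkQ := ⟨v, hw, rfl⟩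
      rw [← hAB] at hmem
      obtain ⟨u, hu, huv⟩ := hmem
      have hu' : f u = 0 := hu
      have hd : v - u ∈ fixedSubmodule ρ :=
        (Submodule.Quotient.eq _).1 huv.symm
      exact hcon ⟨v - u, hd, by rw [map_sub, hu', sub_zero]⟩
    · rintro s _ ⟨v, hv, rfl⟩
      refine ⟨ρ s v - v, ?_, ?_⟩
      · have hv' : σ s (f v) = f v := hv s
        change f (ρ s v - v) = 0
        rw [map_sub, hequiv, hv', sub_self]
      · rw [map_sub]
        rfl
end

section
/- Let k be a field, n ≥ 1, and let H be a subgroup of GL_n(k). Equip sl_n(k), the space of trace-zero n×n matrices, with the conjugation action g·X = gXg^{-1} of H. If sl_n(k) is a semisimple H-module, then the natural module k^n (with H acting by matrix multiplication) is a semisimple H-module. -/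
def IsSemisimpleRep {k S V : Type*} [CommRing k] [Group S] [AddCommGroup V] [Module k V]
    (ρ : Representation k S V) : Prop :=
  ∀ p : Submodule k V, IsSubrep ρ p → ∃ q : Submodule k V, IsSubrep ρ q ∧ IsCompl p q

variable (n : ℕ) (k : Type*) [Field k]

/-- The conjugation representation of `GL_n(k)` on the space of `n × n` matrices:
`g · X = g * X * g⁻¹`. -/
def glConjRep : Representation k (Matrix.GeneralLinearGroup (Fin n) k)
    (Matrix (Fin n) (Fin n) k) where
  toFun g :=
    { toFun := fun X => (g : Matrix (Fin n) (Fin n) k) * X *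
        ((g⁻¹ : Matrix.GeneralLinearGroup (Fin n) k) : Matrix (Fin n) (Fin n) k)
      map_add' := by intro X Y; simp [mul_add, add_mul]
      map_smul' := by intro c X; simp [mul_smul_comm, smul_mul_assoc] }
  map_one' := by
    refine LinearMap.ext fun X => ?_
    simp
  map_mul' g h := by
    refine LinearMap.ext fun X => ?_
    simp [Units.val_mul, mul_inv_rev, mul_assoc, Module.End.mul_apply]

/-- The conjugation representation of a subgroup `H` of `GL_n(k)` on `M_n(k)`. -/
def matConjRep (H : Subgroup (Matrix.GeneralLinearGroup (Fin n) k)) :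
    Representation k H (Matrix (Fin n) (Fin n) k) :=
  (glConjRep n k).comp H.subtype

/-- The natural representation of a subgroup `H` of `GL_n(k)` on `k^n`. -/
def naturalRep (H : Subgroup (Matrix.GeneralLinearGroup (Fin n) k)) :
    Representation k H (Fin n → k) where
  toFun h := Matrix.mulVecLin
    ((h : Matrix.GeneralLinearGroup (Fin n) k) : Matrix (Fin n) (Fin n) k)
  map_one' := by simp [Module.End.one_eq_id]
  map_mul' g h := by
    simp [Units.val_mul, Matrix.mulVecLin_mul, Module.End.mul_eq_comp]

/-- The line of scalar matrices `k · I_n` is stable under conjugation by `GL_n(k)`. -/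
theorem scalarLine_isSubrep_gl :
    IsSubrep (glConjRep n k)
      (Submodule.span k {(1 : Matrix (Fin n) (Fin n) k)}) := by
  intro s v hv
  rw [Submodule.mem_span_singleton] at hv ⊢
  obtain ⟨c, rfl⟩ := hv
  refine ⟨c, ?_⟩
  have hu : ((s : Matrix (Fin n) (Fin n) k)) *
      ((s⁻¹ : Matrix.GeneralLinearGroup (Fin n) k) : Matrix (Fin n) (Fin n) k) = 1 := by
    rw [← Units.val_mul, mul_inv_cancel, Units.val_one]
  show c • (1 : Matrix (Fin n) (Fin n) k) =
    (s : Matrix (Fin n) (Fin n) k) * (c • (1 : Matrix (Fin n) (Fin n) k)) *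
      ((s⁻¹ : Matrix.GeneralLinearGroup (Fin n) k) : Matrix (Fin n) (Fin n) k)
  rw [mul_smul_comm, smul_mul_assoc, mul_one, hu]

/-- The line of scalar matrices is stable under conjugation by any subgroup. -/
theorem scalarLine_isSubrep (H : Subgroup (Matrix.GeneralLinearGroup (Fin n) k)) :
    IsSubrep (matConjRep n k H)
      (Submodule.span k {(1 : Matrix (Fin n) (Fin n) k)}) :=
  fun s v hv => scalarLine_isSubrep_gl n k (s : Matrix.GeneralLinearGroup (Fin n) k) v hv

/-- Semisimplicity of a stable submodule `Wtop` of a representation: every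
`S`-submodule of `Wtop` has an `S`-stable direct complement inside `Wtop`. -/
def IsSemisimpleRepOn {k S V : Type*} [CommRing k] [Group S] [AddCommGroup V] [Module k V]
    (ρ : Representation k S V) (Wtop : Submodule k V) : Prop :=
  ∀ p : Submodule k V, p ≤ Wtop → IsSubrep ρ p →
    ∃ q : Submodule k V, q ≤ Wtop ∧ IsSubrep ρ q ∧ p ⊓ q = ⊥ ∧ p ⊔ q = Wtop

/-- Pure matrix form: `e` an idempotent whose image is stable under `H`. -/
theorem exists_invariant_idempotent {k : Type*} [Field k] {n : ℕ} (hn : 1 ≤ n)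
    (H : Subgroup (Matrix.GeneralLinearGroup (Fin n) k))
    (hss : IsSemisimpleRepOn (matConjRep n k H)
      (LinearMap.ker (Matrix.traceLinearMap (Fin n) k k)))
    (e : Matrix (Fin n) (Fin n) k) (he : e * e = e)
    (hst : ∀ h : H, e * (h : Matrix.GeneralLinearGroup (Fin n) k).val * e =
      (h : Matrix.GeneralLinearGroup (Fin n) k).val * e) :
    ∃ b : Matrix (Fin n) (Fin n) k, b * e = e ∧ e * b = b ∧
      ∀ h : H, b * (h : Matrix.GeneralLinearGroup (Fin n) k).val =
        (h : Matrix.GeneralLinearGroup (Fin n) k).val * b := by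
  have hact : ∀ (h : H) X, matConjRep n k H h X =
      (h : Matrix.GeneralLinearGroup (Fin n) k).val * X *
        ((h⁻¹ : H) : Matrix.GeneralLinearGroup (Fin n) k).val := fun h X => rfl
  have hinv : ∀ h : H, ((h⁻¹ : H) : Matrix.GeneralLinearGroup (Fin n) k).val *
      (h : Matrix.GeneralLinearGroup (Fin n) k).val = 1 := by
    intro h
    rw [← Units.val_mul, ← Subgroup.coe_mul, inv_mul_cancel]; rfl
  let P : Submodule k (Matrix (Fin n) (Fin n) k) :=
    { carrier := {X | e * X * e = X * e}
      add_mem' := by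
        intro X Y hX hY
        simp only [Set.mem_setOf_eq] at *
        rw [mul_add, add_mul, add_mul, hX, hY]
      zero_mem' := by simp
      smul_mem' := by
        intro c X hX
        simp only [Set.mem_setOf_eq] at *
        rw [mul_smul_comm, smul_mul_assoc, smul_mul_assoc, hX] }
  have memP : ∀ X, X ∈ P ↔ e * X * e = X * e := fun X => Iff.rfl
  have P1 : ∀ Y, e * Y ∈ P := by
    intro Y; rw [memP, ← mul_assoc e e Y, he]
  have P2 : ∀ Y, Y * (1 - e) ∈ P := by
    intro Y
    have h0 : (1 - e) * e = 0 := by rw [sub_mul, he, one_mul, sub_self]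
    rw [memP, mul_assoc e, mul_assoc Y, h0]; simp
  have hPst : IsSubrep (matConjRep n k H) P := by
    intro h X hX
    rw [memP] at hX
    rw [hact, memP]
    have h1 := hst h
    have h2 := hst h⁻¹
    generalize (h : Matrix.GeneralLinearGroup (Fin n) k).val = g at *
    generalize ((h⁻¹ : H) : Matrix.GeneralLinearGroup (Fin n) k).val = g' at *
    calc e * (g * X * g') * e = e * g * X * (g' * e) := by noncomm_ring
      _ = e * g * (X * e) * g' * e := by rw [← h2]; noncomm_ring
      _ = (e * g * e) * X * e * g' * e := by rw [← hX]; noncomm_ring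
      _ = g * (e * X * e) * g' * e := by rw [h1]; noncomm_ring
      _ = g * X * (e * g' * e) := by rw [hX]; noncomm_ring
      _ = g * X * g' * e := by rw [h2]; noncomm_ring
  have hTst : IsSubrep (matConjRep n k H)
      (LinearMap.ker (Matrix.traceLinearMap (Fin n) k k)) := by
    intro h X hX
    rw [LinearMap.mem_ker, Matrix.traceLinearMap_apply] at *
    rw [hact, Matrix.trace_mul_comm, ← mul_assoc, hinv, one_mul, hX]
  obtain ⟨C, hCT, hCst, hinf, hsup⟩ := hss
    (P ⊓ LinearMap.ker (Matrix.traceLinearMap (Fin n) k k)) inf_le_right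
    (fun s v hv => ⟨hPst s v hv.1, hTst s v hv.2⟩)
  have hPC : IsCompl P C := by
    constructor
    · rw [disjoint_iff, ← hinf, inf_assoc, inf_eq_right.2 hCT]
    · rw [codisjoint_iff, eq_top_iff]
      intro X _
      let Y : Matrix (Fin n) (Fin n) k := Matrix.single ⟨0, hn⟩ ⟨0, hn⟩ 1
      have hY : Y.trace = 1 := by simp [Y]
      let E := e * Y + Y * (1 - e)
      have hE : E ∈ P := P.add_mem (P1 Y) (P2 Y)
      have hEt : E.trace = 1 := by
        simp only [E]
        rw [Matrix.trace_add, mul_sub, Matrix.trace_sub, Matrix.trace_mul_comm e Y, mul_one, hY]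
        ring
      have hX : X - X.trace • E ∈ LinearMap.ker (Matrix.traceLinearMap (Fin n) k k) := by
        rw [LinearMap.mem_ker, Matrix.traceLinearMap_apply, Matrix.trace_sub,
          Matrix.trace_smul, hEt]
        simp
      rw [← hsup] at hX
      have h1 : X - X.trace • E ∈ P ⊔ C := sup_le_sup_right inf_le_left C hX
      have h2 : X.trace • E ∈ P ⊔ C := Submodule.mem_sup_left (P.smul_mem _ hE)
      have := (P ⊔ C).add_mem h1 h2
      rwa [sub_add_cancel] at this
  let ψ : Matrix (Fin n) (Fin n) k →ₗ[k] k :=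
    (Matrix.traceLinearMap (Fin n) k k).comp (LinearMap.mulLeft k e)
  let φ : Matrix (Fin n) (Fin n) k →ₗ[k] k :=
    LinearMap.ofIsCompl hPC (ψ.comp P.subtype) 0
  have φP : ∀ X ∈ P, φ X = (e * X).trace := by
    intro X hX
    exact LinearMap.ofIsCompl_left_apply hPC (φ := ψ.comp P.subtype) (ψ := 0) ⟨X, hX⟩
  have φC : ∀ X ∈ C, φ X = 0 := by
    intro X hX
    exact LinearMap.ofIsCompl_right_apply hPC (φ := ψ.comp P.subtype) (ψ := 0) ⟨X, hX⟩
  have φinv : ∀ (h : H) X, φ (matConjRep n k H h X) = φ X := by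
    intro h X
    obtain ⟨x, hx, c, hc, rfl⟩ : ∃ x ∈ P, ∃ c ∈ C, x + c = X :=
      Submodule.mem_sup.1 (by rw [hPC.sup_eq_top]; trivial)
    rw [map_add, map_add, map_add, φC _ hc, φC _ (hCst h c hc), φP _ hx, φP _ (hPst h x hx), hact]
    rw [memP] at hx
    have h1 := hst h
    have h2 := hst h⁻¹
    have h3 := hinv h
    generalize (h : Matrix.GeneralLinearGroup (Fin n) k).val = g at *
    generalize ((h⁻¹ : H) : Matrix.GeneralLinearGroup (Fin n) k).val = g' at *
    congr 1
    calc (e * (g * x * g')).trace = (g * (x * (g' * e))).trace := by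
          rw [Matrix.trace_mul_comm]; congr 1; noncomm_ring
      _ = (g * ((x * e) * (g' * e))).trace := by rw [mul_assoc x e, ← mul_assoc e g' e, h2]
      _ = (g * ((e * x * e) * (g' * e))).trace := by rw [hx]
      _ = ((g * e) * (x * (e * g' * e))).trace := by congr 1; noncomm_ring
      _ = ((x * (e * g' * e)) * (g * e)).trace := by rw [Matrix.trace_mul_comm]
      _ = (x * g' * (e * g * e)).trace := by rw [h2]; congr 1; noncomm_ring
      _ = (x * (g' * g) * e).trace := by rw [h1]; congr 1; noncomm_ring
      _ = (e * x).trace := by rw [h3, mul_one, Matrix.trace_mul_comm]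
  obtain ⟨b, hb⟩ : ∃ b : Matrix (Fin n) (Fin n) k, ∀ X, φ X = (b * X).trace := by
    refine ⟨Matrix.of fun i j => φ (Matrix.single j i 1), fun X => ?_⟩
    conv_lhs => rw [Matrix.matrix_eq_sum_single X]
    simp only [map_sum, Matrix.trace, Matrix.diag, Matrix.mul_apply, Matrix.of_apply]
    rw [Finset.sum_comm]
    refine Finset.sum_congr rfl fun i _ => Finset.sum_congr rfl fun j _ => ?_
    have : Matrix.single j i (X j i) = X j i • Matrix.single j i (1 : k) := by
      rw [Matrix.smul_single]; simp
    rw [this, map_smul, smul_eq_mul, mul_comm]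
  refine ⟨b, ?_, ?_, ?_⟩
  · refine Matrix.ext_iff_trace_mul_right.2 fun Y => ?_
    rw [mul_assoc, ← hb, φP _ (P1 Y), ← mul_assoc, he]
  · have : (1 - e) * b = 0 := by
      refine Matrix.ext_iff_trace_mul_right.2 fun Y => ?_
      rw [mul_assoc, Matrix.trace_mul_comm, mul_assoc, ← hb, φP _ (P2 Y), Matrix.trace_mul_comm,
        mul_assoc, sub_mul, he, one_mul, sub_self]
      simp
    rw [sub_mul, one_mul, sub_eq_zero] at this
    exact this.symm
  · intro h
    have key : ((h⁻¹ : H) : Matrix.GeneralLinearGroup (Fin n) k).val * b *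
        (h : Matrix.GeneralLinearGroup (Fin n) k).val = b := by
      refine Matrix.ext_iff_trace_mul_right.2 fun Y => ?_
      rw [← hb, ← φinv h, hb, hact, mul_assoc, mul_assoc, Matrix.trace_mul_comm]
      simp only [mul_assoc]
    have hinv' : (h : Matrix.GeneralLinearGroup (Fin n) k).val *
        ((h⁻¹ : H) : Matrix.GeneralLinearGroup (Fin n) k).val = 1 := by
      rw [← Units.val_mul, ← Subgroup.coe_mul, mul_inv_cancel]; rfl
    conv_rhs => rw [← key]
    rw [← mul_assoc, ← mul_assoc, hinv', one_mul]

/-- if the conjugation `H`-module `sl_n(k)` of trace-zero matrices is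
semisimple, then the natural `H`-module `k^n` is semisimple. -/
theorem stmt_4 {k : Type*} [Field k] {n : ℕ} (hn : 1 ≤ n)
    (H : Subgroup (Matrix.GeneralLinearGroup (Fin n) k))
    (hss : IsSemisimpleRepOn (matConjRep n k H)
      (LinearMap.ker (Matrix.traceLinearMap (Fin n) k k))) :
    IsSemisimpleRep (naturalRep n k H) := by
  intro W hW
  obtain ⟨f, hf⟩ := W.subtype.exists_leftInverse_of_injective W.ker_subtype
  let e := LinearMap.toMatrix' (W.subtype.comp f)
  have e1 : ∀ v, e.mulVec v = f v := fun v => by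
    simp only [e, LinearMap.toMatrix'_mulVec]; rfl
  have e2 : ∀ w ∈ W, e.mulVec w = w := fun w hw => by
    rw [e1]
    exact congrArg Subtype.val (LinearMap.congr_fun hf ⟨w, hw⟩)
  have e3 : ∀ v, e.mulVec v ∈ W := fun v => by rw [e1]; exact (f v).2
  have mext : ∀ A B : Matrix (Fin n) (Fin n) k, (∀ v, A.mulVec v = B.mulVec v) → A = B :=
    fun A B h => Matrix.mulVec_injective (funext h)
  obtain ⟨b, hbe, heb, hbH⟩ := exists_invariant_idempotent hn H hss e
    (mext _ _ fun v => by rw [← Matrix.mulVec_mulVec, e2 _ (e3 v)])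
    (fun h => mext _ _ fun v => by
      rw [← Matrix.mulVec_mulVec, ← Matrix.mulVec_mulVec, ← Matrix.mulVec_mulVec]
      exact e2 _ (hW h _ (e3 v)))
  have b2 : ∀ w ∈ W, b.mulVec w = w := fun w hw => by
    rw [← e2 w hw, Matrix.mulVec_mulVec, hbe]
  have b3 : ∀ v, b.mulVec v ∈ W := fun v => by
    rw [← heb, ← Matrix.mulVec_mulVec]; exact e3 _
  refine ⟨LinearMap.ker b.mulVecLin, ?_, ?_⟩
  · intro h v hv
    rw [LinearMap.mem_ker, Matrix.mulVecLin_apply] at *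
    change b.mulVec ((h : Matrix.GeneralLinearGroup (Fin n) k).val.mulVec v) = 0
    rw [Matrix.mulVec_mulVec, hbH, ← Matrix.mulVec_mulVec, hv, Matrix.mulVec_zero]
  · constructor
    · rw [Submodule.disjoint_def]
      intro w hw hw'
      rw [LinearMap.mem_ker, Matrix.mulVecLin_apply, b2 w hw] at hw'
      exact hw'
    · rw [codisjoint_iff, eq_top_iff]
      intro v _
      refine Submodule.mem_sup.2 ⟨b.mulVec v, b3 v, v - b.mulVec v, ?_, by simp⟩
      rw [LinearMap.mem_ker, Matrix.mulVecLin_apply, Matrix.mulVec_sub, b2 _ (b3 v), sub_self]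
end

section
/- Let k be a field, n ≥ 1, and let H be a subgroup of GL_n(k). Equip pgl_n(k) := M_n(k)/(k·I_n), the quotient of the space of n×n matrices by the line of scalar matrices, with the action induced by conjugation, g·(X + k·I_n) = gXg^{-1} + k·I_n. If pgl_n(k) is a semisimple H-module, then the natural module k^n (with H acting by matrix multiplication) is a semisimple H-module. -/
variable (n : ℕ) (k : Type*) [Field k]

/-- if the `H`-module `pgl_n(k) = M_n(k)/(k·I_n)`, with the action
induced by conjugation, is semisimple, then the natural `H`-module `k^n` is
semisimple. -/
theorem stmt_5 {k : Type*} [Field k] {n : ℕ} (hn : 1 ≤ n)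
    (H : Subgroup (Matrix.GeneralLinearGroup (Fin n) k))
    (hss : IsSemisimpleRep (quotRep (matConjRep n k H)
      (Submodule.span k {(1 : Matrix (Fin n) (Fin n) k)})
      (scalarLine_isSubrep n k H))) :
    IsSemisimpleRep (naturalRep n k H) := by
  classical
  intro p hp
  set N : Submodule k (Matrix (Fin n) (Fin n) k) :=
    Submodule.span k {(1 : Matrix (Fin n) (Fin n) k)} with hN
  -- matrices with image in `p` that vanish on `p`
  let K : Submodule k (Matrix (Fin n) (Fin n) k) :=
    { carrier := {M | (∀ v, M.mulVec v ∈ p) ∧ ∀ v ∈ p, M.mulVec v = 0}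
      add_mem' := by
        rintro A B ⟨hA, hA'⟩ ⟨hB, hB'⟩
        refine ⟨fun v => ?_, fun v hv => ?_⟩
        · rw [Matrix.add_mulVec]; exact p.add_mem (hA v) (hB v)
        · rw [Matrix.add_mulVec, hA' v hv, hB' v hv, add_zero]
      zero_mem' := by
        refine ⟨fun v => ?_, fun v hv => ?_⟩ <;> simp
      smul_mem' := by
        rintro c A ⟨hA, hA'⟩
        refine ⟨fun v => ?_, fun v hv => ?_⟩
        · rw [Matrix.smul_mulVec]; exact p.smul_mem c (hA v)
        · rw [Matrix.smul_mulVec, hA' v hv, smul_zero] }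
  have hKmem : ∀ M, M ∈ K ↔ (∀ v, M.mulVec v ∈ p) ∧ ∀ v ∈ p, M.mulVec v = 0 :=
    fun M => Iff.rfl
  have hact : ∀ (h : H) (v : Fin n → k), v ∈ p →
      ((h : Matrix.GeneralLinearGroup (Fin n) k) : Matrix (Fin n) (Fin n) k).mulVec v ∈ p :=
    fun h v hv => hp h v hv
  have hconj : ∀ (h : H) (M : Matrix (Fin n) (Fin n) k) (v : Fin n → k),
      (matConjRep n k H h M).mulVec v =
      ((h : Matrix.GeneralLinearGroup (Fin n) k) : Matrix (Fin n) (Fin n) k).mulVec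
        (M.mulVec ((((h⁻¹ : H) : Matrix.GeneralLinearGroup (Fin n) k) :
          Matrix (Fin n) (Fin n) k).mulVec v)) := by
    intro h M v
    rw [Matrix.mulVec_mulVec, Matrix.mulVec_mulVec]
    rfl
  have hcancel : ∀ (h : H) (v : Fin n → k),
      ((h : Matrix.GeneralLinearGroup (Fin n) k) : Matrix (Fin n) (Fin n) k).mulVec
      ((((h⁻¹ : H) : Matrix.GeneralLinearGroup (Fin n) k) :
          Matrix (Fin n) (Fin n) k).mulVec v) = v := by
    intro h v
    rw [Matrix.mulVec_mulVec, ← Units.val_mul, ← Subgroup.coe_mul, mul_inv_cancel]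
    simp
  have hKN : ∀ M ∈ K, M ∈ N → M = 0 := by
    intro M hM hMN
    rw [hN, Submodule.mem_span_singleton] at hMN
    obtain ⟨c, rfl⟩ := hMN
    by_cases hc : c = 0
    · simp [hc]
    obtain ⟨h1, h2⟩ := (hKmem _).1 hM
    have h3 : ∀ v, (c • (1 : Matrix (Fin n) (Fin n) k)).mulVec v = 0 := by
      intro v
      apply h2
      have := p.smul_mem c⁻¹ (h1 v)
      rwa [Matrix.smul_mulVec, Matrix.one_mulVec, smul_smul, inv_mul_cancel₀ hc,
        one_smul] at this
    apply Matrix.mulVec_injective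
    funext v
    rw [h3 v, Matrix.zero_mulVec]
  have hKsub : IsSubrep (quotRep (matConjRep n k H) N (scalarLine_isSubrep n k H))
      (K.map N.mkQ) := by
    rintro h _ ⟨M, hM, rfl⟩
    refine ⟨matConjRep n k H h M, ?_, rfl⟩
    obtain ⟨h1, h2⟩ := (hKmem _).1 hM
    refine (hKmem _).2 ⟨fun v => ?_, fun v hv => ?_⟩
    · rw [hconj]; exact hact _ _ (h1 _)
    · rw [hconj, h2 _ (hact _ _ hv), Matrix.mulVec_zero]
  obtain ⟨Q, hQ, hc⟩ := hss _ hKsub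
  -- a linear projection onto `p`
  obtain ⟨f, hf⟩ := p.subtype.exists_leftInverse_of_injective p.ker_subtype
  let E : Matrix (Fin n) (Fin n) k := LinearMap.toMatrix' (p.subtype ∘ₗ f)
  have hE : ∀ v, E.mulVec v = (f v : Fin n → k) := by
    intro v
    simp [E, LinearMap.toMatrix'_mulVec]
  have hfp : ∀ v (hv : v ∈ p), (f v : Fin n → k) = v := by
    intro v hv
    have := LinearMap.congr_fun hf ⟨v, hv⟩
    exact congrArg Subtype.val this
  have hEtop : N.mkQ E ∈ K.map N.mkQ ⊔ Q := by rw [hc.sup_eq_top]; trivial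
  obtain ⟨_, ⟨A, hA, rfl⟩, b, hb, hab⟩ := Submodule.mem_sup.1 hEtop
  obtain ⟨hA1, hA2⟩ := (hKmem _).1 hA
  set B := E - A with hB
  have hBQ : N.mkQ B ∈ Q := by
    have : N.mkQ B = b := by rw [hB, map_sub, ← hab]; abel
    rw [this]; exact hb
  have hB1 : ∀ v, B.mulVec v ∈ p := by
    intro v
    rw [hB, Matrix.sub_mulVec, hE]
    exact p.sub_mem (f v).2 (hA1 v)
  have hB2 : ∀ v ∈ p, B.mulVec v = v := by
    intro v hv
    rw [hB, Matrix.sub_mulVec, hE, hfp v hv, hA2 v hv, sub_zero]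
  have hinv : ∀ h : H, matConjRep n k H h B = B := by
    intro h
    rw [← sub_eq_zero]
    have hK : matConjRep n k H h B - B ∈ K := by
      refine (hKmem _).2 ⟨fun v => ?_, fun v hv => ?_⟩
      · rw [Matrix.sub_mulVec, hconj]
        exact p.sub_mem (hact _ _ (hB1 _)) (hB1 _)
      · rw [Matrix.sub_mulVec, hconj, hB2 v hv, hB2 _ (hact _ _ hv), hcancel, sub_self]
    apply hKN _ hK
    have hq : N.mkQ (matConjRep n k H h B - B) ∈ Q := by
      rw [map_sub]
      exact Q.sub_mem (hQ h _ hBQ) hBQ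
    have h0 : N.mkQ (matConjRep n k H h B - B) ∈ K.map N.mkQ ⊓ Q :=
      ⟨⟨_, hK, rfl⟩, hq⟩
    rw [hc.inf_eq_bot, Submodule.mem_bot] at h0
    exact (Submodule.Quotient.mk_eq_zero N).1 h0
  refine ⟨LinearMap.ker B.mulVecLin, ?_, ?_⟩
  · intro h v hv
    rw [LinearMap.mem_ker, Matrix.mulVecLin_apply] at hv ⊢
    have h1 := hconj h B (naturalRep n k H h v)
    have h2 : (((h⁻¹ : H) : Matrix.GeneralLinearGroup (Fin n) k) :
          Matrix (Fin n) (Fin n) k).mulVec (naturalRep n k H h v) = v := by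
      have := hcancel h⁻¹ v
      rwa [inv_inv] at this
    rw [hinv, h2, hv, Matrix.mulVec_zero] at h1
    exact h1
  · constructor
    · rw [Submodule.disjoint_def]
      intro v hv hv'
      rw [LinearMap.mem_ker, Matrix.mulVecLin_apply, hB2 v hv] at hv'
      exact hv'
    · rw [codisjoint_iff, eq_top_iff]
      intro v _
      refine Submodule.mem_sup.2 ⟨B.mulVec v, hB1 v, v - B.mulVec v, ?_, by abel⟩
      rw [LinearMap.mem_ker, Matrix.mulVecLin_apply, Matrix.mulVec_sub, hB2 _ (hB1 v), sub_self]
end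

section
/- Let k be a field, n ≥ 1, and let H be a subgroup of GL_n(k). Then the conjugation H-module sl_n(k) of trace-zero n×n matrices is semisimple if and only if the H-module pgl_n(k) = M_n(k)/(k·I_n), with the action induced by conjugation, is semisimple. -/
variable (n : ℕ) (k : Type*) [Field k]

open Submodule in
theorem aux_quot {k S V : Type*} [Field k] [Group S] [AddCommGroup V] [Module k V]
    (ρ : Representation k S V) (N : Submodule k V) (hN : IsSubrep ρ N) :
    IsSemisimpleRep (quotRep ρ N hN) ↔
      ∀ p : Submodule k V, N ≤ p → IsSubrep ρ p →
        ∃ q : Submodule k V, N ≤ q ∧ IsSubrep ρ q ∧ p ⊓ q = N ∧ p ⊔ q = ⊤ := by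
  have hs : Function.Surjective N.mkQ := N.mkQ_surjective
  have hact : ∀ s v, quotRep ρ N hN s (N.mkQ v) = N.mkQ (ρ s v) := fun s v => rfl
  have hmap : ∀ p : Submodule k V, IsSubrep ρ p → IsSubrep (quotRep ρ N hN) (p.map N.mkQ) := by
    rintro p hp s _ ⟨v, hv, rfl⟩
    exact ⟨ρ s v, hp s v hv, rfl⟩
  have hcomap : ∀ p : Submodule k (V ⧸ N), IsSubrep (quotRep ρ N hN) p →
      IsSubrep ρ (p.comap N.mkQ) := by
    intro p hp s v hv
    have := hp s _ hv
    rwa [hact] at this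
  have hcm : ∀ p : Submodule k V, N ≤ p → (p.map N.mkQ).comap N.mkQ = p := by
    intro p hp
    rw [comap_map_mkQ, sup_eq_right.2 hp]
  have hbot : (⊥ : Submodule k (V ⧸ N)).comap N.mkQ = N := N.ker_mkQ
  constructor
  · intro h p hp hps
    obtain ⟨q, hq, hc⟩ := h _ (hmap p hps)
    refine ⟨q.comap N.mkQ, le_comap_mkQ N q, hcomap q hq, ?_, ?_⟩
    · rw [← hcm p hp, ← comap_inf, hc.inf_eq_bot, hbot]
    · rw [← hcm (p ⊔ q.comap N.mkQ) (hp.trans le_sup_left), Submodule.map_sup,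
        map_comap_eq_of_surjective hs, hc.sup_eq_top, comap_top]
  · intro h p hps
    obtain ⟨q, hNq, hq, hi, hsup⟩ := h _ (le_comap_mkQ N p) (hcomap p hps)
    refine ⟨q.map N.mkQ, hmap q hq, IsCompl.of_eq ?_ ?_⟩
    · apply comap_injective_of_surjective hs
      rw [comap_inf, hcm q hNq, hi, hbot]
    · rw [← map_comap_eq_of_surjective hs p, ← Submodule.map_sup, hsup, Submodule.map_top,
        range_mkQ]

/-- The trace form. -/
def auxB (n : ℕ) (k : Type*) [Field k] : LinearMap.BilinForm k (Matrix (Fin n) (Fin n) k) :=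
  (LinearMap.mul k (Matrix (Fin n) (Fin n) k)).compr₂ (Matrix.traceLinearMap (Fin n) k k)

theorem auxB_apply {n : ℕ} {k : Type*} [Field k] (X Y : Matrix (Fin n) (Fin n) k) :
    auxB n k X Y = (X * Y).trace := rfl

theorem auxB_refl (n : ℕ) (k : Type*) [Field k] : (auxB n k).IsRefl := by
  intro X Y h
  rw [auxB_apply] at *
  rwa [Matrix.trace_mul_comm]

theorem auxB_nondeg (n : ℕ) (k : Type*) [Field k] : (auxB n k).Nondegenerate := by
  constructor
  · intro X h
    refine Matrix.ext_iff_trace_mul_right.2 fun Y => ?_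
    simpa [auxB_apply] using h Y
  · intro X h
    refine Matrix.ext_iff_trace_mul_left.2 fun Y => ?_
    simpa [auxB_apply] using h Y

theorem auxB_stable {n : ℕ} {k : Type*} [Field k]
    (H : Subgroup (Matrix.GeneralLinearGroup (Fin n) k))
    (p : Submodule k (Matrix (Fin n) (Fin n) k)) (hp : IsSubrep (matConjRep n k H) p) :
    IsSubrep (matConjRep n k H) ((auxB n k).orthogonal p) := by
  intro s v hv x hx
  have h1 := hv _ (hp s⁻¹ x hx)
  change auxB n k x _ = 0
  change auxB n k _ _ = 0 at h1
  rw [auxB_apply] at *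
  rw [← h1]
  change (x * ((s : Matrix.GeneralLinearGroup (Fin n) k).val * v *
    (s : Matrix.GeneralLinearGroup (Fin n) k)⁻¹.val)).trace =
    ((s : Matrix.GeneralLinearGroup (Fin n) k)⁻¹.val * x *
      ((s : Matrix.GeneralLinearGroup (Fin n) k)⁻¹)⁻¹.val * v).trace
  rw [inv_inv, ← mul_assoc, Matrix.trace_mul_comm]
  simp only [mul_assoc]

theorem auxB_one (n : ℕ) (k : Type*) [Field k] :
    (auxB n k).orthogonal (Submodule.span k {(1 : Matrix (Fin n) (Fin n) k)}) =
      LinearMap.ker (Matrix.traceLinearMap (Fin n) k k) := by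
  ext X
  rw [LinearMap.BilinForm.mem_orthogonal_iff, LinearMap.mem_ker]
  constructor
  · intro h
    have := h 1 (Submodule.mem_span_singleton_self 1)
    rwa [auxB_apply, one_mul] at this
  · intro h Y hY
    obtain ⟨c, rfl⟩ := Submodule.mem_span_singleton.1 hY
    rw [map_smul, LinearMap.smul_apply, auxB_apply, one_mul]
    change c • (Matrix.traceLinearMap (Fin n) k k) X = 0
    rw [h, smul_zero]

/-- the conjugation `H`-module `sl_n(k)` is semisimple if and only if
the `H`-module `pgl_n(k) = M_n(k)/(k·I_n)` is semisimple. -/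
theorem stmt_6 {k : Type*} [Field k] {n : ℕ} (hn : 1 ≤ n)
    (H : Subgroup (Matrix.GeneralLinearGroup (Fin n) k)) :
    IsSemisimpleRepOn (matConjRep n k H)
      (LinearMap.ker (Matrix.traceLinearMap (Fin n) k k)) ↔
    IsSemisimpleRep (quotRep (matConjRep n k H)
      (Submodule.span k {(1 : Matrix (Fin n) (Fin n) k)})
      (scalarLine_isSubrep n k H)) := by
  classical
  rw [aux_quot, ← auxB_one]
  set N := Submodule.span k {(1 : Matrix (Fin n) (Fin n) k)}
  set P := (auxB n k).orthogonal with hP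
  have hPP : ∀ W, P (P W) = W :=
    LinearMap.BilinForm.orthogonal_orthogonal (auxB_nondeg n k) (auxB_refl n k)
  have hanti : ∀ {W U}, W ≤ U → P U ≤ P W := fun h => LinearMap.BilinForm.orthogonal_le h
  have hsup : ∀ U W, P (U ⊔ W) = P U ⊓ P W := by
    intro U W
    refine le_antisymm (le_inf (hanti le_sup_left) (hanti le_sup_right)) ?_
    rw [← hPP (P U ⊓ P W)]
    refine hanti (sup_le ?_ ?_)
    · have := hanti (inf_le_left : P U ⊓ P W ≤ P U)
      rwa [hPP] at this
    · have := hanti (inf_le_right : P U ⊓ P W ≤ P W)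
      rwa [hPP] at this
  have hinf : ∀ U W, P (U ⊓ W) = P U ⊔ P W := by
    intro U W
    rw [← hPP (P U ⊔ P W), hsup, hPP, hPP]
  have hbot : P ⊥ = ⊤ := LinearMap.BilinForm.orthogonal_bot
  have htop : P ⊤ = ⊥ := by rw [← hbot, hPP]
  constructor
  · intro h p hp hps
    obtain ⟨q, hq, hqs, hi, hs⟩ := h (P p) (hanti hp) (auxB_stable H p hps)
    refine ⟨P q, ?_, auxB_stable H q hqs, ?_, ?_⟩
    · have := hanti hq
      rwa [hPP] at this
    · rw [← hPP p, ← hsup, hs, hPP]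
    · rw [← hPP p, ← hinf, hi, hbot]
  · intro h p hp hps
    have hp' := hanti hp
    rw [hPP] at hp'
    obtain ⟨q, hq, hqs, hi, hs⟩ := h (P p) hp' (auxB_stable H p hps)
    refine ⟨P q, hanti hq, auxB_stable H q hqs, ?_, ?_⟩
    · rw [← hPP p, ← hsup, hs, htop]
    · rw [← hPP p, ← hinf, hi]
end

section
/- Let p be a prime, k an algebraically closed field of characteristic p, and n = p². Then pgl_n(k) = M_n(k)/(k·I_n), equipped with the GL_n(k)-action induced by conjugation, is not a semisimple GL_n(k)-module. -/
variable (n : ℕ) (k : Type*) [Field k]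

/-- for `p` prime, `k` algebraically closed of characteristic `p` and
`n = p²`, the `GL_n(k)`-module `pgl_n(k) = M_n(k)/(k·I_n)` (with the action induced
by conjugation) is not semisimple. -/
theorem stmt_8 {k : Type*} [Field k] [IsAlgClosed k] (p : ℕ) (hp : p.Prime) [CharP k p] :
    ¬ IsSemisimpleRep (quotRep (glConjRep (p ^ 2) k)
      (Submodule.span k {(1 : Matrix (Fin (p ^ 2)) (Fin (p ^ 2)) k)})
      (scalarLine_isSubrep_gl (p ^ 2) k)) := by
  intro H
  have hn : 4 ≤ p ^ 2 := by nlinarith [hp.two_le]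
  have hcast : ((p ^ 2 : ℕ) : k) = 0 := by
    rw [Nat.cast_pow, CharP.cast_eq_zero k p]; simp
  generalize p ^ 2 = n at *
  set N := Submodule.span k {(1 : Matrix (Fin n) (Fin n) k)} with hN
  have htr : N ≤ LinearMap.ker (Matrix.traceLinearMap (Fin n) k k) := by
    rw [hN, Submodule.span_le, Set.singleton_subset_iff]
    simp [hcast]
  let f : (Matrix (Fin n) (Fin n) k ⧸ N) →ₗ[k] k := N.liftQ _ htr
  have hfmk : ∀ X, f (N.mkQ X) = X.trace := fun X => rfl
  have hconj : ∀ (g : Matrix.GeneralLinearGroup (Fin n) k) (X : Matrix (Fin n) (Fin n) k),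
      quotRep (glConjRep n k) N (scalarLine_isSubrep_gl n k) g (N.mkQ X) =
        N.mkQ ((g : Matrix (Fin n) (Fin n) k) * X *
        ((g⁻¹ : Matrix.GeneralLinearGroup (Fin n) k) : Matrix (Fin n) (Fin n) k)) :=
    fun g X => rfl
  have hinv : ∀ (g : Matrix.GeneralLinearGroup (Fin n) k) v,
      f (quotRep (glConjRep n k) N (scalarLine_isSubrep_gl n k) g v) = f v := by
    intro g v
    obtain ⟨X, rfl⟩ := N.mkQ_surjective v
    rw [hconj, hfmk, hfmk, Matrix.trace_mul_cycle, ← Units.val_mul, inv_mul_cancel,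
      Units.val_one, one_mul]
  obtain ⟨q, hq, hc⟩ := H (LinearMap.ker f) (by
    intro s v hv
    rw [LinearMap.mem_ker] at hv ⊢
    rw [hinv, hv])
  let i0 : Fin n := ⟨0, by omega⟩
  have h1 : N.mkQ (Matrix.single i0 i0 (1 : k)) ∈ LinearMap.ker f ⊔ q := by
    rw [hc.sup_eq_top]; trivial
  obtain ⟨a, ha, b, hb, hab⟩ := Submodule.mem_sup.1 h1
  have hfb : f b = 1 := by
    have := congrArg f hab
    rw [map_add, LinearMap.mem_ker.1 ha, zero_add, hfmk] at this
    simpa using this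
  obtain ⟨X, rfl⟩ := N.mkQ_surjective b
  have key : ∀ g : Matrix.GeneralLinearGroup (Fin n) k, ∃ c : k,
      (g : Matrix (Fin n) (Fin n) k) * X - X * g = c • (g : Matrix (Fin n) (Fin n) k) := by
    intro g
    have h2 := q.sub_mem (hq g _ hb) hb
    have h3 : quotRep (glConjRep n k) N (scalarLine_isSubrep_gl n k) g (N.mkQ X) - N.mkQ X
        ∈ LinearMap.ker f := by
      rw [LinearMap.mem_ker, map_sub, hinv, sub_self]
    have h4 := (Submodule.disjoint_def.1 hc.disjoint) _ h3 h2
    rw [hconj, ← map_sub, Submodule.mkQ_apply, Submodule.Quotient.mk_eq_zero, hN,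
      Submodule.mem_span_singleton] at h4
    obtain ⟨c, hc⟩ := h4
    refine ⟨c, ?_⟩
    have h5 := congrArg (· * (g : Matrix (Fin n) (Fin n) k)) hc
    simp only [smul_mul_assoc, one_mul, sub_mul, mul_assoc] at h5
    rw [← Units.val_mul, inv_mul_cancel, Units.val_one, mul_one] at h5
    exact h5.symm
  have hcomm : ∀ i j : Fin n, i ≠ j → Commute (Matrix.single i j (1 : k)) X := by
    intro i j hij
    let g : Matrix.GeneralLinearGroup (Fin n) k :=
      ⟨Matrix.transvection i j 1, Matrix.transvection i j (-1),
        by rw [Matrix.transvection_mul_transvection_same _ _ hij]; simp,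
        by rw [Matrix.transvection_mul_transvection_same _ _ hij]; simp⟩
    obtain ⟨c, hc⟩ := key g
    have hg : (g : Matrix (Fin n) (Fin n) k) = 1 + Matrix.single i j 1 := rfl
    rw [hg, add_mul, mul_add, one_mul, mul_one, add_sub_add_left_eq_sub] at hc
    obtain ⟨l, hl⟩ : ∃ l : Fin n, l ∉ ({i, j} : Finset (Fin n)) := by
      by_contra! h
      have h6 := Finset.card_le_card (fun x _ => h x : Finset.univ ⊆ ({i, j} : Finset (Fin n)))
      have h7 := Finset.card_le_two (a := i) (b := j)
      rw [Finset.card_univ, Fintype.card_fin] at h6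
      omega
    simp only [Finset.mem_insert, Finset.mem_singleton, not_or] at hl
    have h8 := congrFun (congrFun hc l) l
    have hc0 : c = 0 := by
      simpa [Matrix.single_mul_apply_of_ne, Matrix.mul_single_apply_of_ne, hl.1, hl.2,
        Ne.symm hl.1, Matrix.single_apply, eq_comm] using h8
    rw [hc0, zero_smul] at hc
    exact sub_eq_zero.1 hc
  obtain ⟨c, hcX⟩ := Matrix.mem_range_scalar_of_commute_single hcomm
  rw [hfmk, ← hcX] at hfb
  simp [hcast] at hfb
end

section
/- Let k be an algebraically closed field, n ≥ 1, and let H be a subgroup of GL_n(k). Equip M_n(k), the space of n×n matrices, with the conjugation action g·X = gXg^{-1} of H. If M_n(k) is a semisimple H-module, then the natural module k^n (with H acting by matrix multiplication) is a semisimple H-module. -/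
variable (n : ℕ) (k : Type*) [Field k]

/-- over an algebraically closed field, if the conjugation `H`-module
`M_n(k)` is semisimple, then the natural `H`-module `k^n` is semisimple. -/
theorem stmt_12 {k : Type*} [Field k] [IsAlgClosed k] {n : ℕ} (hn : 1 ≤ n)
    (H : Subgroup (Matrix.GeneralLinearGroup (Fin n) k))
    (hss : IsSemisimpleRep (matConjRep n k H)) :
    IsSemisimpleRep (naturalRep n k H) := by
  intro W hW
  have hW' : ∀ (h : H) (v : Fin n → k), v ∈ W →
      (((h : Matrix.GeneralLinearGroup (Fin n) k) : Matrix (Fin n) (Fin n) k)).mulVec v ∈ W :=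
    fun h v hv => hW h v hv
  have hWi : ∀ (h : H) (v : Fin n → k), v ∈ W →
      (((h : Matrix.GeneralLinearGroup (Fin n) k)⁻¹ : Matrix.GeneralLinearGroup (Fin n) k) :
        Matrix (Fin n) (Fin n) k).mulVec v ∈ W :=
    fun h v hv => hW h⁻¹ v hv
  have hinv : ∀ (g : Matrix.GeneralLinearGroup (Fin n) k) (v : Fin n → k),
      (g : Matrix (Fin n) (Fin n) k).mulVec
        (((g⁻¹ : Matrix.GeneralLinearGroup (Fin n) k) : Matrix (Fin n) (Fin n) k).mulVec v)
        = v := by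
    intro g v
    rw [Matrix.mulVec_mulVec, ← Units.val_mul, mul_inv_cancel, Units.val_one, Matrix.one_mulVec]
  have hact : ∀ (h : H) (X : Matrix (Fin n) (Fin n) k) (v : Fin n → k),
      (matConjRep n k H h X).mulVec v =
        ((h : Matrix.GeneralLinearGroup (Fin n) k) : Matrix (Fin n) (Fin n) k).mulVec (X.mulVec
          ((((h : Matrix.GeneralLinearGroup (Fin n) k)⁻¹ : Matrix.GeneralLinearGroup (Fin n) k) :
        Matrix (Fin n) (Fin n) k).mulVec v)) := by
    intro h X v
    rw [Matrix.mulVec_mulVec, Matrix.mulVec_mulVec]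
    rfl
  let u : Submodule k (Matrix (Fin n) (Fin n) k) :=
    { carrier := {X | (∀ v, X.mulVec v ∈ W) ∧ ∀ w ∈ W, X.mulVec w = 0}
      add_mem' := by
        rintro X Y ⟨h1, h2⟩ ⟨h3, h4⟩
        refine ⟨fun v => ?_, fun w hw => ?_⟩
        · rw [Matrix.add_mulVec]; exact W.add_mem (h1 v) (h3 v)
        · rw [Matrix.add_mulVec, h2 w hw, h4 w hw, add_zero]
      zero_mem' := by
        refine ⟨fun v => ?_, fun w hw => ?_⟩
        · rw [Matrix.zero_mulVec]; exact W.zero_mem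
        · rw [Matrix.zero_mulVec]
      smul_mem' := by
        rintro c X ⟨h1, h2⟩
        refine ⟨fun v => ?_, fun w hw => ?_⟩
        · rw [Matrix.smul_mulVec]; exact W.smul_mem c (h1 v)
        · rw [Matrix.smul_mulVec, h2 w hw, smul_zero] }
  have hu : IsSubrep (matConjRep n k H) u := by
    rintro h X ⟨h1, h2⟩
    refine ⟨fun v => ?_, fun w hw => ?_⟩
    · rw [hact]; exact hW' h _ (h1 _)
    · rw [hact, h2 _ (hWi h w hw), Matrix.mulVec_zero]
  obtain ⟨q, hq, hc⟩ := hss u hu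
  obtain ⟨f, hf⟩ := W.exists_isCompl
  let P : Matrix (Fin n) (Fin n) k := LinearMap.toMatrix' (W.subtype ∘ₗ W.projectionOnto f hf)
  have hP : ∀ v, P.mulVec v = W.projectionOnto f hf v := by
    intro v
    rw [← Matrix.toLin'_apply, Matrix.toLin'_toMatrix']
    rfl
  have hmem : P ∈ u ⊔ q := by rw [hc.sup_eq_top]; trivial
  obtain ⟨a, ⟨ha1, ha2⟩, b, hb, hab⟩ := Submodule.mem_sup.1 hmem
  have hb' : b = P - a := by rw [← hab]; abel
  have hb1 : ∀ v, b.mulVec v ∈ W := by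
    intro v
    rw [hb', Matrix.sub_mulVec, hP]
    exact W.sub_mem (Subtype.mem _) (ha1 v)
  have hb2 : ∀ w ∈ W, b.mulVec w = w := by
    intro w hw
    rw [hb', Matrix.sub_mulVec, hP, ha2 w hw, sub_zero]
    exact congrArg Subtype.val (Submodule.projectionOnto_apply_left hf ⟨w, hw⟩)
  have hcomm : ∀ h : H, matConjRep n k H h b = b := by
    intro h
    have h1 : matConjRep n k H h b - b ∈ u := by
      refine ⟨fun v => ?_, fun w hw => ?_⟩
      · rw [Matrix.sub_mulVec, hact]
        exact W.sub_mem (hW' h _ (hb1 _)) (hb1 v)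
      · rw [Matrix.sub_mulVec, hact, hb2 _ (hWi h w hw), hinv, hb2 w hw, sub_self]
    have h2 : matConjRep n k H h b - b ∈ q := q.sub_mem (hq h b hb) hb
    exact sub_eq_zero.1 (Submodule.disjoint_def.1 hc.disjoint _ h1 h2)
  refine ⟨LinearMap.ker b.mulVecLin, ?_, ?_⟩
  · intro h v hv
    rw [LinearMap.mem_ker, Matrix.mulVecLin_apply] at hv ⊢
    change b.mulVec (((h : Matrix.GeneralLinearGroup (Fin n) k) :
      Matrix (Fin n) (Fin n) k).mulVec v) = 0
    have h3 := hact h b (((h : Matrix.GeneralLinearGroup (Fin n) k) :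
      Matrix (Fin n) (Fin n) k).mulVec v)
    rw [hcomm h] at h3
    rw [h3, Matrix.mulVec_mulVec v, ← Units.val_mul, inv_mul_cancel, Units.val_one,
      Matrix.one_mulVec, hv, Matrix.mulVec_zero]
  · refine IsCompl.of_eq ?_ ?_
    · rw [eq_bot_iff]
      rintro w ⟨hw, hw2⟩
      have h4 : b.mulVec w = 0 := hw2
      rw [hb2 w hw] at h4
      exact h4
    · rw [eq_top_iff]
      intro v _
      refine Submodule.mem_sup.2 ⟨b.mulVec v, hb1 v, v - b.mulVec v, ?_, by abel⟩
      rw [LinearMap.mem_ker, Matrix.mulVecLin_apply, Matrix.mulVec_sub, hb2 _ (hb1 v), sub_self]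
end
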